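/- The infinite series identity 6√2 = Σ_{k=0}^{∞} (-1/4)^k · [(1/8)_k (5/8)_k (3/4)_k] / [(7/8)_k (1)_k (11/8)_k] · (40k + 9) holds, where the sum is over natural numbers k and all quantities are real numbers. -/

import Mathlib

noncomputable def risingFactorial (a : ℝ) (k : ℕ) : ℝ := ∏ i ∈ Finset.range k, (a + i)

/-!
Put `ρ = 1 + u ^ 8 / 4`. The ratio `(1/8)_k (5/8)_k / ((7/8)_k (11/8)_k) = (1/4)_{2k} / (7/4)_{2k}`
is the ratio of the Beta integrals `∫₀¹ u ^ (8k) √(1 - u⁴) du` and `∫₀¹ √(1 - u⁴) du`, so summing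
the remaining binomial series under the integral sign turns the claim into
`∫₀¹ √(1 - u⁴) (30 ρ ^ (-7/4) - 21 ρ ^ (-3/4)) du = 6 √2 ∫₀¹ √(1 - y⁴) dy`.
Let `q` be the positive root of `q² = u⁴ q + 1`, so that `√ρ = (q² + 1) / (2q)`. The substitution
`y = u q / √(1 + q)` fixes `0` and `1`, and turns the right-hand integrand into one that differs
from the left-hand one by the derivative of an algebraic function vanishing at both endpoints.
-/

open MeasureTheory Set
open scoped Nat

section RisingFactorial

lemma risingFactorial_zero (a : ℝ) : risingFactorial a 0 = 1 := Finset.prod_range_zero _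

lemma risingFactorial_succ (a : ℝ) (k : ℕ) :
    risingFactorial a (k + 1) = risingFactorial a k * (a + k) :=
  Finset.prod_range_succ _ _

lemma risingFactorial_pos {a : ℝ} (ha : 0 < a) (k : ℕ) : 0 < risingFactorial a k :=
  Finset.prod_pos fun _ _ => by positivity

lemma risingFactorial_eq_ascPochhammer_eval (a : ℝ) (k : ℕ) :
    risingFactorial a k = (ascPochhammer ℝ k).eval a := by
  induction k with
  | zero => simp [risingFactorial_zero]
  | succ k ih => rw [risingFactorial_succ, ih, ascPochhammer_succ_eval]

lemma risingFactorial_one (k : ℕ) : risingFactorial 1 k = k ! := by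
  rw [risingFactorial_eq_ascPochhammer_eval, ascPochhammer_eval_one]

lemma mul_risingFactorial_add_one (a : ℝ) (k : ℕ) :
    a * risingFactorial (a + 1) k = (a + k) * risingFactorial a k := by
  rw [mul_comm (a + k), ← risingFactorial_succ, risingFactorial, risingFactorial,
    Finset.prod_range_succ', mul_comm]
  push_cast
  simp only [add_zero, add_assoc, add_comm (1 : ℝ)]

lemma risingFactorial_two_mul (a : ℝ) (k : ℕ) :
    risingFactorial (2 * a) (2 * k) =
      4 ^ k * (risingFactorial a k * risingFactorial (a + 1 / 2) k) := by
  induction k with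
  | zero => simp [risingFactorial_zero]
  | succ k ih =>
    rw [Nat.mul_succ, risingFactorial_succ, risingFactorial_succ, ih, risingFactorial_succ,
      risingFactorial_succ]
    push_cast
    ring

lemma ringChoose_add_sub_one_eq_risingFactorial_div (a : ℝ) (k : ℕ) :
    Ring.choose (a + k - 1) k = risingFactorial a k / k ! := by
  have h := Ring.factorial_nsmul_multichoose_eq_ascPochhammer a k
  rw [Polynomial.ascPochhammer_smeval_eq_eval, nsmul_eq_mul] at h
  rw [← Ring.multichoose_eq, risingFactorial_eq_ascPochhammer_eval, ← h]
  field_simp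

lemma hasSum_risingFactorial_div_factorial_mul_pow (a : ℝ) {x : ℝ} (hx : |x| < 1) :
    HasSum (fun k : ℕ => risingFactorial a k / k ! * x ^ k) ((1 - x) ^ (-a)) := by
  have hx_pos : 0 ≤ 1 - x := by linarith [(abs_lt.mp hx).2]
  have h := (Real.one_div_one_sub_rpow_hasFPowerSeriesOnBall_zero a).hasSum (y := x)
    (by simpa [enorm_eq_nnnorm, ← NNReal.coe_lt_coe] using hx)
  rw [zero_add, one_div, ← Real.rpow_neg hx_pos] at h
  refine h.congr_fun fun k => ?_
  simp [ringChoose_add_sub_one_eq_risingFactorial_div, mul_comm]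

lemma hasSum_risingFactorial_div_factorial_mul_affine_mul_pow (a α β : ℝ) {x : ℝ}
    (hx : |x| < 1) :
    HasSum (fun k : ℕ => risingFactorial a k / k ! * (α * k + β) * x ^ k)
      (α * a * (1 - x) ^ (-(a + 1)) + (β - α * a) * (1 - x) ^ (-a)) := by
  refine (((hasSum_risingFactorial_div_factorial_mul_pow (a + 1) hx).mul_left (α * a)).add
    ((hasSum_risingFactorial_div_factorial_mul_pow a hx).mul_left (β - α * a))).congr_fun
      fun k => ?_
  linear_combination -(α * x ^ k / k !) * mul_risingFactorial_add_one a k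

end RisingFactorial

section Integrals

lemma hasSum_mul_integral_pow_mul {c : ℕ → ℝ} (hc : Summable c) (e : ℕ → ℕ) {w : ℝ → ℝ}
    (hw : IntervalIntegrable w volume 0 1) :
    HasSum (fun k => c k * ∫ u in (0 : ℝ)..1, u ^ e k * w u)
      (∫ u in (0 : ℝ)..1, (∑' k, c k * u ^ e k) * w u) := by
  have norm_le {u : ℝ} (hu : u ∈ uIoc 0 1) (k : ℕ) : ‖c k * u ^ e k‖ ≤ |c k| := by
    rw [uIoc_of_le zero_le_one] at hu
    rw [norm_mul, Real.norm_eq_abs, norm_pow, Real.norm_of_nonneg hu.1.le]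
    exact mul_le_of_le_one_right (abs_nonneg _) (pow_le_one₀ hu.1.le hu.2)
  have summable_pow {u : ℝ} (hu : u ∈ uIoc 0 1) : Summable fun k => c k * u ^ e k :=
    .of_norm_bounded hc.abs (norm_le hu)
  have key : HasSum (fun k => ∫ u in (0 : ℝ)..1, c k * u ^ e k * w u)
      (∫ u in (0 : ℝ)..1, (∑' k, c k * u ^ e k) * w u) := by
    refine intervalIntegral.hasSum_integral_of_dominated_convergence (fun k u => |c k| * |w u|)
      (fun k => ?_) (fun k => ?_) ?_ ?_ ?_
    · exact (Continuous.aestronglyMeasurable (by fun_prop)).mul hw.def'.aestronglyMeasurable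
    · refine .of_forall fun u hu => ?_
      rw [norm_mul, Real.norm_eq_abs (w u)]
      exact mul_le_mul_of_nonneg_right (norm_le hu k) (abs_nonneg _)
    · exact .of_forall fun u _ => hc.abs.mul_right _
    · simpa only [tsum_mul_right] using hw.abs.const_mul _
    · exact .of_forall fun u hu => (summable_pow hu).hasSum.mul_right _
  simpa only [mul_assoc, intervalIntegral.integral_const_mul] using key

/-- The Beta-type integral `∫₀¹ uᵐ (1 - uⁿ)ᵖ du`, that is `B((m + 1) / n, p + 1) / n`. -/
noncomputable def betaMoment (n : ℕ) (p : ℝ) (m : ℕ) : ℝ :=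
  ∫ u in (0 : ℝ)..1, u ^ m * (1 - u ^ n) ^ p

variable {n : ℕ} {p : ℝ}

lemma continuous_one_sub_pow_rpow (n : ℕ) (hp : 0 ≤ p) :
    Continuous fun u : ℝ => (1 - u ^ n) ^ p :=
  Continuous.rpow_const (by fun_prop) fun _ => Or.inr hp

lemma one_sub_pow_pos (hn : n ≠ 0) {u : ℝ} (hu : u ∈ Ioo 0 1) : 0 < 1 - u ^ n :=
  sub_pos.mpr (pow_lt_one₀ hu.1.le hu.2 hn)

lemma betaMoment_pos (hn : n ≠ 0) (hp : 0 ≤ p) (m : ℕ) : 0 < betaMoment n p m :=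
  intervalIntegral.intervalIntegral_pos_of_pos_on
    (((continuous_pow m).mul (continuous_one_sub_pow_rpow n hp)).intervalIntegrable 0 1)
    (fun _ hu => mul_pos (pow_pos hu.1 m) (Real.rpow_pos_of_pos (one_sub_pow_pos hn hu) p))
    zero_lt_one

lemma betaMoment_add (hn : n ≠ 0) (hp : 0 ≤ p) (m : ℕ) :
    (m + 1 + n * (p + 1)) * betaMoment n p (m + n) = (m + 1) * betaMoment n p m := by
  have hcont := continuous_one_sub_pow_rpow n hp
  have hcont_succ := continuous_one_sub_pow_rpow n (add_nonneg hp zero_le_one)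
  have hderiv (u : ℝ) (hu : u ∈ Ioo 0 1) :
      HasDerivAt (fun v : ℝ => v ^ (m + 1) * (1 - v ^ n) ^ (p + 1))
        ((m + 1) * (u ^ m * (1 - u ^ n) ^ p) -
          (m + 1 + n * (p + 1)) * (u ^ (m + n) * (1 - u ^ n) ^ p)) u := by
    have hpos := one_sub_pow_pos hn hu
    have hmul := (hasDerivAt_pow (m + 1) u).mul
      (((hasDerivAt_pow n u).const_sub 1).rpow_const (p := p + 1) (Or.inl hpos.ne'))
    convert! hmul using 1
    obtain ⟨n, rfl⟩ := Nat.exists_eq_succ_of_ne_zero hn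
    simp only [Nat.succ_eq_add_one, add_tsub_cancel_right, Real.rpow_add_one hpos.ne']
    push_cast
    ring
  have hint := intervalIntegral.integral_eq_sub_of_hasDerivAt_of_le zero_le_one
    (by fun_prop) hderiv (Continuous.intervalIntegrable (by fun_prop) _ _)
  rw [intervalIntegral.integral_sub (Continuous.intervalIntegrable (by fun_prop) _ _)
    (Continuous.intervalIntegrable (by fun_prop) _ _), intervalIntegral.integral_const_mul,
    intervalIntegral.integral_const_mul] at hint
  have hp1 : p + 1 ≠ 0 := by positivity
  simp only [one_pow, sub_self, Real.zero_rpow hp1, mul_zero, ne_eq, Nat.add_eq_zero_iff,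
    one_ne_zero, and_false, not_false_eq_true, zero_pow, zero_mul] at hint
  exact (sub_eq_zero.mp hint).symm

lemma betaMoment_add_mul (hn : n ≠ 0) (hp : 0 ≤ p) (m k : ℕ) :
    betaMoment n p (m + n * k) =
      risingFactorial ((m + 1) / n) k / risingFactorial ((m + 1) / n + (p + 1)) k *
        betaMoment n p m := by
  induction k with
  | zero => simp [risingFactorial_zero]
  | succ k ih =>
    have := risingFactorial_pos (a := (m + 1) / n + (p + 1)) (by positivity) k
    have hrec := betaMoment_add hn hp (m + n * k)
    rw [ih] at hrec
    push_cast at hrec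
    rw [Nat.mul_succ, ← add_assoc, risingFactorial_succ, risingFactorial_succ]
    have hn' : (n : ℝ) ≠ 0 := Nat.cast_ne_zero.mpr hn
    have hden : (m : ℝ) + n * k + 1 + n * (p + 1) ≠ 0 := by positivity
    rw [← mul_right_inj' hden, hrec]
    field_simp
    ring

lemma betaMoment_four_half_eight_mul (k : ℕ) :
    betaMoment 4 (1 / 2) (8 * k) =
      risingFactorial (1 / 8) k * risingFactorial (5 / 8) k /
        (risingFactorial (7 / 8) k * risingFactorial (11 / 8) k) * betaMoment 4 (1 / 2) 0 := by
  have h := betaMoment_add_mul four_ne_zero one_half_pos.le 0 (2 * k)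
  have hnum := risingFactorial_two_mul (1 / 8) k
  have hden := risingFactorial_two_mul (7 / 8) k
  norm_num at h hnum hden ⊢
  rw [show 8 * k = 4 * (2 * k) by ring, h, hnum, hden, mul_div_mul_left _ _ (by positivity)]

end Integrals

section MetallicMean

/-- The metallic mean: the positive root `x` of `x ^ 2 = t * x + 1`. -/
noncomputable def metallicMean (t : ℝ) : ℝ := (t + √(t ^ 2 + 4)) / 2

lemma metallicMean_sq (t : ℝ) : metallicMean t ^ 2 = t * metallicMean t + 1 := by
  have h : √(t ^ 2 + 4) ^ 2 = t ^ 2 + 4 := Real.sq_sqrt (by positivity)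
  unfold metallicMean
  linear_combination h / 4

lemma metallicMean_pos (t : ℝ) : 0 < metallicMean t := by
  have h : |t| < √(t ^ 2 + 4) := Real.lt_sqrt_of_sq_lt (by rw [sq_abs]; linarith)
  unfold metallicMean
  linarith [neg_abs_le t]

lemma eq_metallicMean_sq_sub_one_div (t : ℝ) :
    t = (metallicMean t ^ 2 - 1) / metallicMean t := by
  rw [metallicMean_sq, add_sub_cancel_right, mul_div_cancel_right₀ _ (metallicMean_pos t).ne']

lemma sqrt_sq_add_four_eq (t : ℝ) :
    √(t ^ 2 + 4) = (metallicMean t ^ 2 + 1) / metallicMean t := by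
  have hpos := metallicMean_pos t
  have hsq := metallicMean_sq t
  rw [eq_div_iff hpos.ne', show √(t ^ 2 + 4) = 2 * metallicMean t - t by unfold metallicMean; ring]
  linear_combination hsq

lemma one_add_sq_div_four_eq (t : ℝ) :
    1 + t ^ 2 / 4 = ((metallicMean t ^ 2 + 1) / (2 * metallicMean t)) ^ 2 := by
  have h : √(t ^ 2 + 4) ^ 2 = t ^ 2 + 4 := Real.sq_sqrt (by positivity)
  rw [sqrt_sq_add_four_eq] at h
  rw [mul_comm 2, ← div_div]
  linear_combination -h / 4

lemma hasDerivAt_metallicMean (t : ℝ) :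
    HasDerivAt metallicMean (metallicMean t ^ 2 / (metallicMean t ^ 2 + 1)) t := by
  have hpos := metallicMean_pos t
  have hsq : HasDerivAt (fun x : ℝ => x ^ 2 + 4) (2 * t) t := by
    simpa using (hasDerivAt_pow 2 t).add_const 4
  have h := ((hasDerivAt_id t).add (hsq.sqrt (by positivity))).div_const 2
  convert! h using 1
  rw [sqrt_sq_add_four_eq]
  field_simp
  linear_combination metallicMean_sq t

lemma continuous_metallicMean : Continuous metallicMean := by
  unfold metallicMean
  fun_prop

lemma continuous_metallicMean_pow_four : Continuous fun u : ℝ => metallicMean (u ^ 4) :=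
  continuous_metallicMean.comp (continuous_pow 4)

lemma hasDerivAt_metallicMean_pow_four (u : ℝ) :
    HasDerivAt (fun v : ℝ => metallicMean (v ^ 4))
      (4 * u ^ 3 * metallicMean (u ^ 4) ^ 2 / (metallicMean (u ^ 4) ^ 2 + 1)) u := by
  have h := (hasDerivAt_metallicMean (u ^ 4)).comp u (hasDerivAt_pow 4 u)
  convert! h using 1
  push_cast
  ring

end MetallicMean

section OneAddPowEight

lemma continuous_one_add_pow_eight_rpow (p : ℝ) :
    Continuous fun u : ℝ => (1 + u ^ 8 / 4) ^ p :=
  Continuous.rpow_const (by fun_prop) fun _ => Or.inl (by positivity)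

lemma hasDerivAt_one_add_pow_eight_rpow (p u : ℝ) :
    HasDerivAt (fun v : ℝ => (1 + v ^ 8 / 4) ^ p)
      (2 * u ^ 7 * p * (1 + u ^ 8 / 4) ^ (p - 1)) u := by
  have h := (((hasDerivAt_pow 8 u).div_const 4).const_add 1).rpow_const (p := p)
    (Or.inl (by positivity))
  convert! h using 1
  push_cast
  ring

lemma one_add_pow_eight_rpow_half (u : ℝ) :
    (1 + u ^ 8 / 4) ^ (1 / 2 : ℝ) =
      (metallicMean (u ^ 4) ^ 2 + 1) / (2 * metallicMean (u ^ 4)) := by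
  have hpos := metallicMean_pos (u ^ 4)
  rw [← Real.sqrt_eq_rpow, show u ^ 8 = (u ^ 4) ^ 2 by ring, one_add_sq_div_four_eq,
    Real.sqrt_sq (by positivity)]

lemma one_add_pow_eight_rpow_neg_quarter (u : ℝ) :
    (1 + u ^ 8 / 4) ^ (-(1 / 4) : ℝ) =
      √(2 * metallicMean (u ^ 4) / (metallicMean (u ^ 4) ^ 2 + 1)) := by
  have hρ : 0 ≤ 1 + u ^ 8 / 4 := by positivity
  rw [← inv_div (_ + 1), ← one_add_pow_eight_rpow_half, Real.sqrt_eq_rpow, ← Real.rpow_neg hρ,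
    ← Real.rpow_mul hρ]
  norm_num

lemma one_add_pow_eight_rpow_neg_quarter_eq_mul (u : ℝ) :
    (1 + u ^ 8 / 4) ^ (-(1 / 4) : ℝ) = (1 + u ^ 8 / 4) ^ (-(7 / 4) : ℝ) *
      ((metallicMean (u ^ 4) ^ 2 + 1) / (2 * metallicMean (u ^ 4))) ^ 3 := by
  have hρ : 0 < 1 + u ^ 8 / 4 := by positivity
  rw [← one_add_pow_eight_rpow_half, ← Real.rpow_mul_natCast hρ.le, ← Real.rpow_add hρ]
  norm_num

end OneAddPowEight

section EllipticIntegral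

/-- The algebraic substitution `y(u) = u q / √(1 + q)`, `q = metallicMean (u ^ 4)`, which carries
the integral `∫₀¹ √(1 - y⁴) dy` to an integral over the curve `r ^ 4 = 1 + u ^ 8 / 4`. -/
noncomputable def quarticSubst (u : ℝ) : ℝ :=
  u * (metallicMean (u ^ 4) / √(1 + metallicMean (u ^ 4)))

lemma continuous_quarticSubst : Continuous quarticSubst := by
  have hq := continuous_metallicMean_pow_four
  refine continuous_id.mul (hq.div (by fun_prop) fun u => ?_)
  have := metallicMean_pos (u ^ 4)
  positivity

lemma quarticSubst_zero : quarticSubst 0 = 0 := by simp [quarticSubst]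

lemma quarticSubst_one : quarticSubst 1 = 1 := by
  have hpos := metallicMean_pos 1
  have hsq : 1 + metallicMean 1 = metallicMean 1 ^ 2 := by linear_combination -metallicMean_sq 1
  rw [quarticSubst, one_pow, hsq, Real.sqrt_sq hpos.le, div_self hpos.ne', one_mul]

lemma hasDerivAt_div_sqrt_one_add {x : ℝ} (hx : 0 < 1 + x) :
    HasDerivAt (fun y : ℝ => y / √(1 + y)) ((x + 2) / (2 * (1 + x) * √(1 + x))) x := by
  have hsqrt : √(1 + x) ^ 2 = 1 + x := Real.sq_sqrt hx.le
  have h := (hasDerivAt_id x).div (((hasDerivAt_id x).const_add 1).sqrt hx.ne') (by positivity)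
  convert! h using 1
  simp only [id, hsqrt]
  field_simp
  linear_combination -2 * hsqrt

lemma hasDerivAt_quarticSubst (u : ℝ) :
    HasDerivAt quarticSubst
      (metallicMean (u ^ 4) * (3 * metallicMean (u ^ 4) ^ 2 + 2 * metallicMean (u ^ 4) - 3) /
        (√(1 + metallicMean (u ^ 4)) * (metallicMean (u ^ 4) ^ 2 + 1))) u := by
  have hq_pos := metallicMean_pos (u ^ 4)
  have hu := eq_metallicMean_sq_sub_one_div (u ^ 4)
  have h := (hasDerivAt_id u).mul
    ((hasDerivAt_div_sqrt_one_add (x := metallicMean (u ^ 4)) (by positivity)).comp u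
      (hasDerivAt_metallicMean_pow_four u))
  convert! h using 1
  simp only [id, Function.comp_apply]
  set q := metallicMean (u ^ 4)
  have hu' : u ^ 4 * q = q ^ 2 - 1 := by rw [hu]; field_simp
  field_simp
  linear_combination -4 * (q + 2) * hu'

lemma one_sub_quarticSubst_pow_four (u : ℝ) :
    1 - quarticSubst u ^ 4 =
      (1 - u ^ 4) * (metallicMean (u ^ 4) * (metallicMean (u ^ 4) ^ 2 + 1) /
        (1 + metallicMean (u ^ 4))) := by
  have hpos := metallicMean_pos (u ^ 4)
  have hsqrt : √(1 + metallicMean (u ^ 4)) ^ 2 = 1 + metallicMean (u ^ 4) :=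
    Real.sq_sqrt (by positivity)
  have hu := eq_metallicMean_sq_sub_one_div (u ^ 4)
  rw [quarticSubst, mul_pow, div_pow, show 4 = 2 * 2 from rfl, pow_mul √_, hsqrt]
  set q := metallicMean (u ^ 4)
  rw [hu]
  field_simp
  ring

/-- The integrand that `√2 * ∫₀¹ √(1 - y⁴) dy` acquires under `quarticSubst`. -/
noncomputable def quarticSubstIntegrand (u : ℝ) : ℝ :=
  √(1 - u ^ 4) * (metallicMean (u ^ 4) *
    (3 * metallicMean (u ^ 4) ^ 2 + 2 * metallicMean (u ^ 4) - 3) /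
      (1 + metallicMean (u ^ 4))) * (1 + u ^ 8 / 4) ^ (-(1 / 4) : ℝ)

lemma continuous_quarticSubstIntegrand : Continuous quarticSubstIntegrand := by
  have hq := continuous_metallicMean_pow_four
  refine .mul (.mul (by fun_prop) (.div (by fun_prop) (by fun_prop) fun u => ?_))
    (continuous_one_add_pow_eight_rpow _)
  have := metallicMean_pos (u ^ 4)
  positivity

lemma quarticSubstIntegrand_eq_comp_mul_deriv (u : ℝ) :
    quarticSubstIntegrand u = √2 * (√(1 - quarticSubst u ^ 4) *
      (metallicMean (u ^ 4) * (3 * metallicMean (u ^ 4) ^ 2 + 2 * metallicMean (u ^ 4) - 3) /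
        (√(1 + metallicMean (u ^ 4)) * (metallicMean (u ^ 4) ^ 2 + 1)))) := by
  have hq_pos := metallicMean_pos (u ^ 4)
  rw [quarticSubstIntegrand, one_add_pow_eight_rpow_neg_quarter, one_sub_quarticSubst_pow_four]
  generalize metallicMean (u ^ 4) = q at *
  have hsqrt : √2 * √(q * (q ^ 2 + 1) / (1 + q)) =
      √(2 * q / (q ^ 2 + 1)) * ((q ^ 2 + 1) / √(1 + q)) := by
    rw [← Real.sqrt_mul zero_le_two, ← Real.sqrt_sq (by positivity : 0 ≤ q ^ 2 + 1),
      ← Real.sqrt_div (by positivity), ← Real.sqrt_mul (by positivity),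
      Real.sqrt_sq (by positivity : 0 ≤ q ^ 2 + 1)]
    congr 1
    field_simp
  have hden : √(1 + q) ^ 2 = 1 + q := Real.sq_sqrt (by positivity)
  calc
    _ = √(1 - u ^ 4) * (√(2 * q / (q ^ 2 + 1)) * ((q ^ 2 + 1) / √(1 + q))) *
        (q * (3 * q ^ 2 + 2 * q - 3) / (√(1 + q) * (q ^ 2 + 1))) := by
      field_simp
      rw [hden]
    _ = _ := by
      rw [← hsqrt, Real.sqrt_mul' _ (by positivity)]
      ring

lemma integral_quarticSubstIntegrand :
    ∫ u in (0 : ℝ)..1, quarticSubstIntegrand u = √2 * ∫ y in (0 : ℝ)..1, √(1 - y ^ 4) := by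
  have hq := continuous_metallicMean_pow_four
  have hsubst := intervalIntegral.integral_comp_mul_deriv'' (a := 0) (b := 1)
    (g := fun y => √(1 - y ^ 4)) continuous_quarticSubst.continuousOn
    (fun u _ => (hasDerivAt_quarticSubst u).hasDerivWithinAt)
    (Continuous.continuousOn <| .div (by fun_prop) (by fun_prop) fun u => by
      have := metallicMean_pos (u ^ 4)
      positivity)
    (Continuous.continuousOn (by fun_prop))
  rw [quarticSubst_zero, quarticSubst_one] at hsubst
  simp only [quarticSubstIntegrand_eq_comp_mul_deriv, intervalIntegral.integral_const_mul, ← hsubst,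
    Function.comp_apply]

/-- An algebraic function, vanishing at `0` and `1`, whose derivative is the difference of the two
integrands compared in `integral_sqrt_one_sub_pow_four_mul`. -/
noncomputable def quarticPrimitive (u : ℝ) : ℝ :=
  u * √(1 - u ^ 4) ^ 3 * (metallicMean (u ^ 4) *
    (metallicMean (u ^ 4) ^ 2 + metallicMean (u ^ 4) + 4) / (1 + metallicMean (u ^ 4))) *
      (1 + u ^ 8 / 4) ^ (-(3 / 4) : ℝ)

lemma continuous_quarticPrimitive : Continuous quarticPrimitive := by
  have hq := continuous_metallicMean_pow_four
  refine .mul (.mul (by fun_prop) (.div (by fun_prop) (by fun_prop) fun u => ?_))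
    (continuous_one_add_pow_eight_rpow _)
  have := metallicMean_pos (u ^ 4)
  positivity

lemma hasDerivAt_mul_quadratic_div_one_add {x : ℝ} (hx : 1 + x ≠ 0) :
    HasDerivAt (fun y : ℝ => y * (y ^ 2 + y + 4) / (1 + y))
      (2 * (x ^ 2 + 1) * (x + 2) / (1 + x) ^ 2) x := by
  have h := ((hasDerivAt_id x).mul (((hasDerivAt_pow 2 x).add (hasDerivAt_id x)).add_const 4)).div
    ((hasDerivAt_id x).const_add 1) hx
  convert! h using 1
  simp only [id, Pi.mul_apply, Pi.add_apply]
  push_cast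
  ring

lemma hasDerivAt_sqrt_one_sub_pow_four_pow_three {u : ℝ} (hu : 0 < 1 - u ^ 4) :
    HasDerivAt (fun v : ℝ => √(1 - v ^ 4) ^ 3) (-6 * u ^ 3 * √(1 - u ^ 4)) u := by
  have h := (((hasDerivAt_pow 4 u).const_sub 1).sqrt hu.ne').pow 3
  convert! h using 1
  push_cast
  field_simp
  ring

lemma quarticPrimitive_deriv_identity {q t : ℝ} (hq : 0 < q) (ht : t = (q ^ 2 - 1) / q) :
    30 - 21 * (1 + t ^ 2 / 4) -
        6 * (q * (3 * q ^ 2 + 2 * q - 3) / (1 + q)) * ((q ^ 2 + 1) / (2 * q)) ^ 3 =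
      ((1 - 7 * t) * (q * (q ^ 2 + q + 4) / (1 + q)) +
          (1 - t) * (2 * (q ^ 2 + 1) * (q + 2) / (1 + q) ^ 2 *
            (4 * t * q ^ 2 / (q ^ 2 + 1)))) * (1 + t ^ 2 / 4) -
        3 / 2 * t ^ 2 * (1 - t) * (q * (q ^ 2 + q + 4) / (1 + q)) := by
  rw [ht]
  field_simp
  ring

lemma hasDerivAt_quarticPrimitive {u : ℝ} (hu : 0 < 1 - u ^ 4) :
    HasDerivAt quarticPrimitive
      (√(1 - u ^ 4) * (30 * (1 + u ^ 8 / 4) ^ (-(7 / 4) : ℝ) -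
        21 * (1 + u ^ 8 / 4) ^ (-(3 / 4) : ℝ)) - 6 * quarticSubstIntegrand u) u := by
  have hq_pos := metallicMean_pos (u ^ 4)
  have hρ : 1 + u ^ 8 / 4 ≠ 0 := by positivity
  have hs : √(1 - u ^ 4) ^ 3 = √(1 - u ^ 4) * (1 - u ^ 4) := by
    rw [pow_succ', Real.sq_sqrt hu.le]
  have hρ_rpow : (1 + u ^ 8 / 4) ^ (-(3 / 4) : ℝ) =
      (1 + u ^ 8 / 4) ^ (-(7 / 4) : ℝ) * (1 + u ^ 8 / 4) := by
    rw [← Real.rpow_add_one hρ]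
    norm_num
  have h := (((hasDerivAt_id u).mul (hasDerivAt_sqrt_one_sub_pow_four_pow_three hu)).mul
    ((hasDerivAt_mul_quadratic_div_one_add (x := metallicMean (u ^ 4)) (by positivity)).comp u
      (hasDerivAt_metallicMean_pow_four u))).mul (hasDerivAt_one_add_pow_eight_rpow (-(3 / 4)) u)
  convert! h using 1
  norm_num only [id, Function.comp_apply, Pi.mul_apply]
  rw [quarticSubstIntegrand, one_add_pow_eight_rpow_neg_quarter_eq_mul, hρ_rpow, hs]
  linear_combination (√(1 - u ^ 4) * (1 + u ^ 8 / 4) ^ (-(7 / 4) : ℝ)) *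
    quarticPrimitive_deriv_identity hq_pos (eq_metallicMean_sq_sub_one_div (u ^ 4))

lemma integral_sqrt_one_sub_pow_four_mul :
    ∫ u in (0 : ℝ)..1, √(1 - u ^ 4) * (30 * (1 + u ^ 8 / 4) ^ (-(7 / 4) : ℝ) -
        21 * (1 + u ^ 8 / 4) ^ (-(3 / 4) : ℝ)) =
      6 * √2 * ∫ u in (0 : ℝ)..1, √(1 - u ^ 4) := by
  have hR := continuous_quarticSubstIntegrand
  have hρ := continuous_one_add_pow_eight_rpow
  have hFTC := intervalIntegral.integral_eq_sub_of_hasDerivAt_of_le zero_le_one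
    continuous_quarticPrimitive.continuousOn
    (fun u hu => hasDerivAt_quarticPrimitive (one_sub_pow_pos four_ne_zero hu))
    (Continuous.intervalIntegrable (by fun_prop) _ _)
  have hzero : quarticPrimitive 0 = 0 := by simp [quarticPrimitive]
  have hone : quarticPrimitive 1 = 0 := by simp [quarticPrimitive]
  rw [intervalIntegral.integral_sub (Continuous.intervalIntegrable (by fun_prop) _ _)
    (Continuous.intervalIntegrable (by fun_prop) _ _), intervalIntegral.integral_const_mul,
    integral_quarticSubstIntegrand, hzero, hone] at hFTC
  linear_combination hFTC

end EllipticIntegral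

section Series

lemma tsum_mul_pow_eight_mul {u : ℝ} (hu : |u| ≤ 1) :
    ∑' k : ℕ, risingFactorial (3 / 4) k / k ! * (40 * k + 9) * (-1 / 4) ^ k * u ^ (8 * k) =
      30 * (1 + u ^ 8 / 4) ^ (-(7 / 4) : ℝ) - 21 * (1 + u ^ 8 / 4) ^ (-(3 / 4) : ℝ) := by
  have hu8 : |u ^ 8| ≤ 1 := by
    rw [abs_pow]
    exact pow_le_one₀ (abs_nonneg u) hu
  have hx : |(-1 / 4) * u ^ 8| < 1 := by
    rw [abs_mul, show |(-1 / 4 : ℝ)| = 1 / 4 by norm_num [abs_of_neg]]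
    linarith
  have h := (hasSum_risingFactorial_div_factorial_mul_affine_mul_pow (3 / 4) 40 9 hx).tsum_eq
  simp only [mul_pow, ← pow_mul, ← mul_assoc] at h
  rw [h]
  ring_nf

lemma hasSum_mul_betaMoment :
    HasSum (fun k : ℕ => risingFactorial (3 / 4) k / k ! * (40 * k + 9) * (-1 / 4) ^ k *
        betaMoment 4 (1 / 2) (8 * k))
      (6 * √2 * betaMoment 4 (1 / 2) 0) := by
  have hsummable := (hasSum_risingFactorial_div_factorial_mul_affine_mul_pow (3 / 4) 40 9
    (x := -1 / 4) (by norm_num [abs_lt])).summable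
  have h := hasSum_mul_integral_pow_mul hsummable (8 * ·)
    (w := fun u => √(1 - u ^ 4)) (Continuous.intervalIntegrable (by fun_prop) _ _)
  simp only [betaMoment, ← Real.sqrt_eq_rpow, pow_zero, one_mul]
  rw [← integral_sqrt_one_sub_pow_four_mul]
  convert! h using 1
  refine intervalIntegral.integral_congr fun u hu => ?_
  rw [uIcc_of_le zero_le_one] at hu
  rw [tsum_mul_pow_eight_mul (abs_le.mpr ⟨by linarith [hu.1], hu.2⟩), mul_comm]

end Series

theorem stmt_4 :
    6 * Real.sqrt 2 =
      ∑' k : ℕ, (-1/4 : ℝ) ^ k * (risingFactorial (1/8) k * risingFactorial (5/8) k * risingFactorial (3/4) k) /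
        (risingFactorial (7/8) k * risingFactorial (1) k * risingFactorial (11/8) k) * (40 * (k:ℝ) + 9) := by
  have hM : betaMoment 4 (1 / 2) 0 ≠ 0 := (betaMoment_pos four_ne_zero one_half_pos.le 0).ne'
  have h := hasSum_mul_betaMoment.div_const (betaMoment 4 (1 / 2) 0)
  rw [mul_div_cancel_right₀ _ hM] at h
  rw [← h.tsum_eq]
  refine tsum_congr fun k => ?_
  rw [betaMoment_four_half_eight_mul, risingFactorial_one]
  field_simp
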